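/- Let X be a finite-dimensional real inner product space, let C¹, C² ⊆ X be nonempty closed convex sets with C = C¹ ∩ C² nonempty, and suppose the normal cone decomposition N_C(x) = N_{C¹}(x) + N_{C²}(x) holds for every x ∈ C. Let F : X → X be α-cocoercive with α > 1/2 and assume the variational inequality VI(F, C) has a solution. Define the Davis–Yin operator T(z) = z − P_{C¹}(z) + P_{C²}(2P_{C¹}(z) − z − F(P_{C¹}(z))). Then for every initial point z¹ ∈ X, the sequence z^{n+1} = T(z^n) converges to a fixed point z∘ of T, and the sequence P_{C¹}(z^n) converges to the point x∘ = P_{C¹}(z∘), which is a solution of VI(F, C). -/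

import Mathlib

open RealInnerProductSpace

/-!
Cocoercivity carries the whole argument. Metric projections are `1`-cocoercive, and if `J₁`, `J₂`
are `1`-cocoercive and `F` is `α`-cocoercive, then the residual `R = id - T` of the Davis–Yin
operator `T` is `(1 - 1 / (4 * α))`-cocoercive. For `α > 1/2` this constant exceeds `1/2`, so each
step of `T` brings the iterate closer to every fixed point by an amount controlled by the residual.
Hence the residuals tend to `0`, all cluster points are fixed points, and in a proper space the
iterates converge. Fixed points correspond to solutions of the variational inequality through
`x = P₁ z`: the fixed point equation splits `-F x` into the normal vectors `z - x` to `C₁` and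
`x - z - F x` to `C₂`.
-/

open Filter Function Topology
open scoped Pointwise

theorem exists_tendsto_of_antitone_dist {X : Type*} [PseudoMetricSpace X] [ProperSpace X]
    {u : ℕ → X} {S : Set X} (hS : S.Nonempty)
    (hanti : ∀ s ∈ S, Antitone fun n => dist (u n) s)
    (hcluster : ∀ x, MapClusterPt x atTop u → x ∈ S) :
    ∃ x ∈ S, Tendsto u atTop (𝓝 x) := by
  obtain ⟨s, hs⟩ := hS
  have hbounded : ∀ n, u n ∈ Metric.closedBall s (dist (u 0) s) := fun n =>
    Metric.mem_closedBall.2 (hanti s hs n.zero_le)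
  obtain ⟨x, -, φ, hφ, hlim⟩ := (isCompact_closedBall s _).tendsto_subseq hbounded
  have hx : x ∈ S := hcluster x (hlim.mapClusterPt.of_comp hφ.tendsto_atTop)
  refine ⟨x, hx, tendsto_iff_dist_tendsto_zero.2 ?_⟩
  exact (tendsto_iff_tendsto_subseq_of_antitone (hanti x hx) hφ.tendsto_atTop).2
    (tendsto_iff_dist_tendsto_zero.1 hlim)

section InnerProductSpace

variable {X : Type*} [NormedAddCommGroup X] [InnerProductSpace ℝ X]

theorem inner_le_mul_sq_norm_add_sq_norm_div {α : ℝ} (hα : 0 < α) (x y : X) :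
    ⟪x, y⟫ ≤ α * ‖x‖ ^ 2 + ‖y‖ ^ 2 / (4 * α) := by
  have hsq : 0 ≤ (2 * α * ‖x‖ - ‖y‖) ^ 2 / (4 * α) := by positivity
  have hexpand : (2 * α * ‖x‖ - ‖y‖) ^ 2 / (4 * α) =
      α * ‖x‖ ^ 2 + ‖y‖ ^ 2 / (4 * α) - ‖x‖ * ‖y‖ := by
    field_simp
    ring
  linarith [real_inner_le_norm x y]

/-- `F` is `α`-cocoercive. The case `α = 1` is firm nonexpansiveness. -/
def IsCocoercive (α : ℝ) (F : X → X) : Prop :=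
  ∀ x y : X, α * ‖F x - F y‖ ^ 2 ≤ ⟪F x - F y, x - y⟫

/-- The normal cone of `C` at `x`; it is defined for every `x`, not only for `x ∈ C`. -/
def normalCone (C : Set X) (x : X) : Set X :=
  {v | ∀ y ∈ C, ⟪v, y - x⟫ ≤ 0}

/-- `P` maps every point to a nearest point of `C`. For convex `C` this determines `P`, and having
such a `P` as data replaces the completeness needed to construct it. -/
def IsMetricProjection (C : Set X) (P : X → X) : Prop :=
  ∀ z, P z ∈ C ∧ ∀ x ∈ C, ‖z - P z‖ ≤ ‖z - x‖

/-- `x` solves the variational inequality `VI(F, C)`. -/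
def IsVISolution (F : X → X) (C : Set X) (x : X) : Prop :=
  x ∈ C ∧ ∀ y ∈ C, 0 ≤ ⟪F x, y - x⟫

/-- The Davis–Yin operator of `J₁`, `J₂` (projections, or more generally resolvents) and `F`, with
unit step size. -/
def davisYin (J₁ J₂ F : X → X) (z : X) : X :=
  z - J₁ z + J₂ ((2 : ℝ) • J₁ z - z - F (J₁ z))

section Cocoercive

variable {α β : ℝ} {F T : X → X}

theorem IsCocoercive.lipschitzWith (hF : IsCocoercive α F) (hα : 0 < α) :
    LipschitzWith (Real.toNNReal α⁻¹) F := by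
  refine LipschitzWith.of_dist_le' fun x y => ?_
  rw [dist_eq_norm, dist_eq_norm, le_inv_mul_iff₀ hα]
  have hle : (α * ‖F x - F y‖) * ‖F x - F y‖ ≤ ‖x - y‖ * ‖F x - F y‖ := by
    linarith [hF x y, real_inner_le_norm (F x - F y) (x - y)]
  rcases (norm_nonneg (F x - F y)).eq_or_lt with hzero | hpos
  · simp only [← hzero, mul_zero, norm_nonneg]
  · exact le_of_mul_le_mul_right hle hpos

theorem IsCocoercive.continuous (hF : IsCocoercive α F) (hα : 0 < α) : Continuous F :=
  (hF.lipschitzWith hα).continuous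

theorem IsCocoercive.sq_norm_map_sub_map_le (hT : IsCocoercive β fun z => z - T z) (x y : X) :
    ‖T x - T y‖ ^ 2 ≤
      ‖x - y‖ ^ 2 - (2 * β - 1) * ‖(x - T x) - (y - T y)‖ ^ 2 := by
  have hxy : T x - T y = (x - y) - ((x - T x) - (y - T y)) := by abel
  rw [hxy, norm_sub_sq_real, real_inner_comm]
  linarith [hT x y]

theorem IsCocoercive.sq_norm_map_sub_fixedPt_le (hT : IsCocoercive β fun z => z - T z) {w : X}
    (hw : IsFixedPt T w) (z : X) :
    ‖T z - w‖ ^ 2 ≤ ‖z - w‖ ^ 2 - (2 * β - 1) * ‖z - T z‖ ^ 2 := by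
  simpa only [hw.eq, sub_self, sub_zero] using hT.sq_norm_map_sub_map_le z w

theorem IsCocoercive.antitone_norm_iterate_sub (hT : IsCocoercive β fun z => z - T z)
    (hβ : 1 / 2 ≤ β) {w : X} (hw : IsFixedPt T w) (z : X) :
    Antitone fun n => ‖T^[n] z - w‖ := by
  refine antitone_nat_of_succ_le fun n => ?_
  rw [iterate_succ_apply']
  have hdecr := hT.sq_norm_map_sub_fixedPt_le hw (T^[n] z)
  have hresidual : 0 ≤ (2 * β - 1) * ‖T^[n] z - T (T^[n] z)‖ ^ 2 :=
    mul_nonneg (by linarith) (sq_nonneg _)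
  exact (sq_le_sq₀ (norm_nonneg _) (norm_nonneg _)).1 (by linarith)

theorem IsCocoercive.tendsto_iterate_sub_map_iterate (hT : IsCocoercive β fun z => z - T z)
    (hβ : 1 / 2 < β) {w : X} (hw : IsFixedPt T w) (z : X) :
    Tendsto (fun n => T^[n] z - T (T^[n] z)) atTop (𝓝 0) := by
  have hc : 0 < 2 * β - 1 := by linarith
  obtain ⟨l, hl⟩ : ∃ l, Tendsto (fun n => ‖T^[n] z - w‖) atTop (𝓝 l) :=
    ⟨_, tendsto_atTop_ciInf (hT.antitone_norm_iterate_sub hβ.le hw z)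
      ⟨0, Set.forall_mem_range.2 fun _ => norm_nonneg _⟩⟩
  have hdecr : Tendsto
      (fun n => (‖T^[n] z - w‖ ^ 2 - ‖T^[n + 1] z - w‖ ^ 2) / (2 * β - 1)) atTop (𝓝 0) := by
    simpa using ((hl.pow 2).sub ((hl.comp (tendsto_add_atTop_nat 1)).pow 2)).div_const (2 * β - 1)
  have hsq : Tendsto (fun n => ‖T^[n] z - T (T^[n] z)‖ ^ 2) atTop (𝓝 0) := by
    refine squeeze_zero (fun n => sq_nonneg _) (fun n => ?_) hdecr
    rw [le_div_iff₀ hc, iterate_succ_apply']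
    linarith [hT.sq_norm_map_sub_fixedPt_le hw (T^[n] z)]
  exact tendsto_zero_iff_norm_tendsto_zero.2 (by simpa using hsq.sqrt)

theorem IsCocoercive.exists_tendsto_iterate [ProperSpace X]
    (hT : IsCocoercive β fun z => z - T z) (hβ : 1 / 2 < β) (hfix : (fixedPoints T).Nonempty)
    (z : X) : ∃ z₀, IsFixedPt T z₀ ∧ Tendsto (fun n => T^[n] z) atTop (𝓝 z₀) := by
  refine exists_tendsto_of_antitone_dist hfix (fun w hw => ?_) fun x hx => ?_
  · simpa only [dist_eq_norm] using hT.antitone_norm_iterate_sub hβ.le hw z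
  · obtain ⟨w, hw⟩ := hfix
    obtain ⟨φ, hφ, hlim⟩ := hx.tendsto_subseq
    have hresidual : Tendsto (fun n => T^[φ n] z - T (T^[φ n] z)) atTop (𝓝 (x - T x)) :=
      ((hT.continuous (by linarith)).tendsto x).comp hlim
    have hzero := (hT.tendsto_iterate_sub_map_iterate hβ hw z).comp hφ.tendsto_atTop
    exact (sub_eq_zero.1 (tendsto_nhds_unique hresidual hzero)).symm

end Cocoercive

section Projection

variable {C C₁ C₂ : Set X} {P : X → X}

theorem inner_sub_sub_nonneg_of_mem_normalCone {x y u v : X} (hx : x ∈ C) (hy : y ∈ C)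
    (hu : u ∈ normalCone C x) (hv : v ∈ normalCone C y) : 0 ≤ ⟪u - v, x - y⟫ := by
  have huy : ⟪u, y - x⟫ ≤ 0 := hu y hy
  have hvx : ⟪v, x - y⟫ ≤ 0 := hv x hx
  rw [← neg_sub x y, inner_neg_right] at huy
  rw [inner_sub_left]
  linarith

theorem normalCone_add_normalCone_subset (x : X) :
    normalCone C₁ x + normalCone C₂ x ⊆ normalCone (C₁ ∩ C₂) x := by
  rintro _ ⟨u, hu, v, hv, rfl⟩ y ⟨hy₁, hy₂⟩
  rw [inner_add_left]
  exact add_nonpos (hu y hy₁) (hv y hy₂)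

theorem isVISolution_iff_neg_mem_normalCone {F : X → X} {x : X} :
    IsVISolution F C x ↔ x ∈ C ∧ -F x ∈ normalCone C x := by
  refine and_congr_right fun _ => forall₂_congr fun y _ => ?_
  rw [inner_neg_left, neg_nonpos]

theorem IsMetricProjection.sub_mem_normalCone (hP : IsMetricProjection C P) (hC : Convex ℝ C)
    (z : X) : z - P z ∈ normalCone C (P z) := by
  have : Nonempty C := ⟨⟨P z, (hP z).1⟩⟩
  refine (norm_eq_iInf_iff_real_inner_le_zero hC (hP z).1).1 (le_antisymm ?_ ?_)
  · exact le_ciInf fun x => (hP z).2 x x.2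
  · exact ciInf_le (f := fun x : C => ‖z - x‖)
      ⟨0, Set.forall_mem_range.2 fun _ => norm_nonneg _⟩ ⟨P z, (hP z).1⟩

theorem IsMetricProjection.eq_iff (hP : IsMetricProjection C P) (hC : Convex ℝ C) {z x : X} :
    P z = x ↔ x ∈ C ∧ z - x ∈ normalCone C x := by
  refine ⟨?_, fun ⟨hx, hzx⟩ => ?_⟩
  · rintro rfl
    exact ⟨(hP z).1, hP.sub_mem_normalCone hC z⟩
  · have hmono := inner_sub_sub_nonneg_of_mem_normalCone (hP z).1 hx
      (hP.sub_mem_normalCone hC z) hzx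
    rw [sub_sub_sub_cancel_left, ← neg_sub (P z) x, inner_neg_left, neg_nonneg,
      real_inner_self_nonpos] at hmono
    exact sub_eq_zero.1 hmono

theorem IsMetricProjection.isCocoercive (hP : IsMetricProjection C P) (hC : Convex ℝ C) :
    IsCocoercive 1 P := by
  intro z w
  have hmono := inner_sub_sub_nonneg_of_mem_normalCone (hP z).1 (hP w).1
    (hP.sub_mem_normalCone hC z) (hP.sub_mem_normalCone hC w)
  rw [sub_sub_sub_comm, inner_sub_left, real_inner_self_eq_norm_sq, real_inner_comm] at hmono
  linarith

end Projection

section DavisYin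

variable {J₁ J₂ F : X → X} {α : ℝ}

theorem IsCocoercive.sub_davisYin (h₁ : IsCocoercive 1 J₁) (h₂ : IsCocoercive 1 J₂)
    (hF : IsCocoercive α F) (hα : 0 < α) :
    IsCocoercive (1 - 1 / (4 * α)) fun z => z - davisYin J₁ J₂ F z := by
  intro z w
  let y : X → X := fun z => (2 : ℝ) • J₁ z - z - F (J₁ z)
  set d := z - w
  set a := J₁ z - J₁ w
  set b := J₂ (y z) - J₂ (y w)
  set f := F (J₁ z) - F (J₁ w)
  have hresidual : (z - davisYin J₁ J₂ F z) - (w - davisYin J₁ J₂ F w) = a - b := by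
    simp only [davisYin, a, b, y]
    abel
  have hy : y z - y w = (2 : ℝ) • a - d - f := by
    simp only [y, a, d, f, smul_sub]
    abel
  have ha : ‖a‖ ^ 2 ≤ ⟪a, d⟫ := by simpa only [one_mul] using h₁ z w
  have hb : ‖b‖ ^ 2 ≤ 2 * ⟪a, b⟫ - ⟪b, d⟫ - ⟪b, f⟫ := by
    have hb_inner : 1 * ‖b‖ ^ 2 ≤ ⟪b, y z - y w⟫ := h₂ (y z) (y w)
    simpa only [one_mul, hy, inner_sub_right, real_inner_smul_right, real_inner_comm a b]
      using hb_inner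
  have hf : α * ‖f‖ ^ 2 ≤ ⟪f, a⟫ := hF (J₁ z) (J₁ w)
  have hyoung := inner_le_mul_sq_norm_add_sq_norm_div hα f (a - b)
  rw [hresidual]
  calc (1 - 1 / (4 * α)) * ‖a - b‖ ^ 2
      = ‖a - b‖ ^ 2 - ‖a - b‖ ^ 2 / (4 * α) := by ring
    _ ≤ ‖a - b‖ ^ 2 + α * ‖f‖ ^ 2 - ⟪f, a - b⟫ := by linarith
    _ ≤ ‖a - b‖ ^ 2 + ⟪f, b⟫ := by rw [inner_sub_right]; linarith
    _ = ‖a‖ ^ 2 + ‖b‖ ^ 2 - 2 * ⟪a, b⟫ + ⟪b, f⟫ := by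
      rw [norm_sub_sq_real, real_inner_comm f b]
      ring
    _ ≤ ⟪a, d⟫ - ⟪b, d⟫ := by linarith
    _ = ⟪a - b, d⟫ := (inner_sub_left a b d).symm

theorem isFixedPt_davisYin_iff {z : X} :
    IsFixedPt (davisYin J₁ J₂ F) z ↔ J₂ ((2 : ℝ) • J₁ z - z - F (J₁ z)) = J₁ z := by
  rw [IsFixedPt, davisYin, sub_add, sub_eq_self, sub_eq_zero, eq_comm]

theorem exists_tendsto_davisYin_iterate [ProperSpace X] (h₁ : IsCocoercive 1 J₁)
    (h₂ : IsCocoercive 1 J₂) (hF : IsCocoercive α F) (hα : 1 / 2 < α)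
    (hfix : (fixedPoints (davisYin J₁ J₂ F)).Nonempty) (z : X) :
    ∃ z₀, IsFixedPt (davisYin J₁ J₂ F) z₀ ∧
      Tendsto (fun n => (davisYin J₁ J₂ F)^[n] z) atTop (𝓝 z₀) := by
  have hαpos : 0 < α := by linarith
  have hβ : 1 / 2 < 1 - 1 / (4 * α) := by
    have : 1 / (4 * α) < 1 / 2 := one_div_lt_one_div_of_lt two_pos (by linarith)
    linarith
  exact (h₁.sub_davisYin h₂ hF hαpos).exists_tendsto_iterate hβ hfix z

variable {C₁ C₂ : Set X} {P₁ P₂ : X → X}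

theorem isFixedPt_davisYin_iff_mem_normalCone (hP₂ : IsMetricProjection C₂ P₂)
    (hC₂ : Convex ℝ C₂) {z : X} :
    IsFixedPt (davisYin J₁ P₂ F) z ↔
      J₁ z ∈ C₂ ∧ J₁ z - z - F (J₁ z) ∈ normalCone C₂ (J₁ z) := by
  have hsub : (2 : ℝ) • J₁ z - z - F (J₁ z) - J₁ z = J₁ z - z - F (J₁ z) := by module
  rw [isFixedPt_davisYin_iff, hP₂.eq_iff hC₂, hsub]

theorem isVISolution_of_isFixedPt_davisYin (hP₁ : IsMetricProjection C₁ P₁)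
    (hC₁ : Convex ℝ C₁) (hP₂ : IsMetricProjection C₂ P₂) (hC₂ : Convex ℝ C₂) {z : X}
    (hz : IsFixedPt (davisYin P₁ P₂ F) z) : IsVISolution F (C₁ ∩ C₂) (P₁ z) := by
  obtain ⟨hmem, hnormal⟩ := (isFixedPt_davisYin_iff_mem_normalCone hP₂ hC₂).1 hz
  have hsplit : -F (P₁ z) = (z - P₁ z) + (P₁ z - z - F (P₁ z)) := by abel
  refine isVISolution_iff_neg_mem_normalCone.2 ⟨⟨(hP₁ z).1, hmem⟩, ?_⟩
  rw [hsplit]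
  exact normalCone_add_normalCone_subset _
    (Set.add_mem_add (hP₁.sub_mem_normalCone hC₁ z) hnormal)

theorem exists_isFixedPt_davisYin (hP₁ : IsMetricProjection C₁ P₁) (hC₁ : Convex ℝ C₁)
    (hP₂ : IsMetricProjection C₂ P₂) (hC₂ : Convex ℝ C₂) {x : X} (hx : x ∈ C₁ ∩ C₂)
    (hFx : -F x ∈ normalCone C₁ x + normalCone C₂ x) :
    ∃ z, IsFixedPt (davisYin P₁ P₂ F) z ∧ P₁ z = x := by
  obtain ⟨u, hu, v, hv, huv⟩ := hFx
  have hproj : P₁ (x + u) = x := (hP₁.eq_iff hC₁).2 ⟨hx.1, by rwa [add_sub_cancel_left]⟩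
  have hv_eq : x - (x + u) - F x = v := by
    rw [sub_eq_add_neg _ (F x), ← show u + v = -F x from huv]
    abel
  refine ⟨x + u, (isFixedPt_davisYin_iff_mem_normalCone hP₂ hC₂).2 ?_, hproj⟩
  rw [hproj, hv_eq]
  exact ⟨hx.2, hv⟩

end DavisYin

theorem stmt_11_general [ProperSpace X] {C₁ C₂ : Set X} (hC₁ : Convex ℝ C₁) (hC₂ : Convex ℝ C₂)
    {F : X → X} {α : ℝ} (hα : 1 / 2 < α) (hF : IsCocoercive α F)
    {P₁ P₂ : X → X} (hP₁ : IsMetricProjection C₁ P₁) (hP₂ : IsMetricProjection C₂ P₂)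
    (hsol : ∃ x ∈ C₁ ∩ C₂, -F x ∈ normalCone C₁ x + normalCone C₂ x) (z : X) :
    ∃ z₀, IsFixedPt (davisYin P₁ P₂ F) z₀ ∧
      Tendsto (fun n => (davisYin P₁ P₂ F)^[n] z) atTop (𝓝 z₀) ∧
      Tendsto (fun n => P₁ ((davisYin P₁ P₂ F)^[n] z)) atTop (𝓝 (P₁ z₀)) ∧
      IsVISolution F (C₁ ∩ C₂) (P₁ z₀) := by
  obtain ⟨x, hx, hFx⟩ := hsol
  obtain ⟨w, hw, -⟩ := exists_isFixedPt_davisYin hP₁ hC₁ hP₂ hC₂ hx hFx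
  have hJ₁ := hP₁.isCocoercive hC₁
  obtain ⟨z₀, hz₀, hlim⟩ :=
    exists_tendsto_davisYin_iterate hJ₁ (hP₂.isCocoercive hC₂) hF hα ⟨w, hw⟩ z
  exact ⟨z₀, hz₀, hlim, ((hJ₁.continuous one_pos).tendsto z₀).comp hlim,
    isVISolution_of_isFixedPt_davisYin hP₁ hC₁ hP₂ hC₂ hz₀⟩

end InnerProductSpace

/-- Convergence of the Davis–Yin (N-FPN) iteration: under the normal cone decomposition
`N_C = N_{C₁} + N_{C₂}` on `C = C₁ ∩ C₂`, with `F` `α`-cocoercive (`α > 1/2`) and the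
variational inequality `VI(F, C)` solvable, the iteration `zⁿ⁺¹ = T zⁿ` of the Davis–Yin
operator converges from any starting point to a fixed point `z₀` of `T`, the projections
`P₁ zⁿ` converge to `x₀ = P₁ z₀`, and `x₀` solves `VI(F, C)`. -/
theorem stmt_11 {X : Type*} [NormedAddCommGroup X] [InnerProductSpace ℝ X]
    [FiniteDimensional ℝ X]
    (C₁ C₂ : Set X)
    (h₁ne : C₁.Nonempty) (h₁cl : IsClosed C₁) (h₁cv : Convex ℝ C₁)
    (h₂ne : C₂.Nonempty) (h₂cl : IsClosed C₂) (h₂cv : Convex ℝ C₂)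
    (C : Set X) (hC : C = C₁ ∩ C₂) (hCne : C.Nonempty)
    (hNC : ∀ x ∈ C, ∀ w : X,
      (∀ y ∈ C, ⟪w, y - x⟫ ≤ 0) ↔
        ∃ u v : X, (∀ y ∈ C₁, ⟪u, y - x⟫ ≤ 0) ∧ (∀ y ∈ C₂, ⟪v, y - x⟫ ≤ 0) ∧ w = u + v)
    (F : X → X) (α : ℝ) (hα : 1 / 2 < α)
    (hF : ∀ x y : X, α * ‖F x - F y‖ ^ 2 ≤ ⟪F x - F y, x - y⟫)
    (hVI : ∃ x₀, x₀ ∈ C ∧ ∀ x ∈ C, 0 ≤ ⟪F x₀, x - x₀⟫)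
    (P₁ P₂ : X → X)
    (hP₁ : ∀ z, P₁ z ∈ C₁ ∧ ∀ x ∈ C₁, ‖z - P₁ z‖ ≤ ‖z - x‖)
    (hP₂ : ∀ z, P₂ z ∈ C₂ ∧ ∀ x ∈ C₂, ‖z - P₂ z‖ ≤ ‖z - x‖)
    (T : X → X)
    (hT : ∀ z, T z = z - P₁ z + P₂ ((2 : ℝ) • P₁ z - z - F (P₁ z)))
    (z₁ : X) :
    ∃ z₀ : X, T z₀ = z₀ ∧
      Filter.Tendsto (fun n : ℕ => T^[n] z₁) Filter.atTop (nhds z₀) ∧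
      Filter.Tendsto (fun n : ℕ => P₁ (T^[n] z₁)) Filter.atTop (nhds (P₁ z₀)) ∧
      (P₁ z₀ ∈ C ∧ ∀ x ∈ C, 0 ≤ ⟪F (P₁ z₀), x - P₁ z₀⟫) := by
  obtain rfl : T = davisYin P₁ P₂ F := funext hT
  subst hC
  obtain ⟨x₀, hx₀, hmin⟩ := hVI
  obtain ⟨u, v, hu, hv, huv⟩ := (hNC x₀ hx₀ (-F x₀)).1
    (isVISolution_iff_neg_mem_normalCone.1 ⟨hx₀, hmin⟩).2
  exact stmt_11_general h₁cv h₂cv hα hF hP₁ hP₂ ⟨x₀, hx₀, u, hu, v, hv, huv.symm⟩ z₁
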